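/- arXiv:1612.06335 — 3 statements merged into one kernel-verified Lean document; each statement's English description precedes it below -/
import Mathlib

section
/- Let 0 < β < 1, γ = β/4, and K ≥ 2 an integer. For each n let G_n be a finite directed graph on N_n vertices in which every vertex has outdegree at most N_n·r_n, let M_n = 2^{γn}, and let ε_n ≥ 2^{−γn/2}. Assume: (i) (−log₂ r_n)/n → β as n → ∞; (ii) (log₂ N_n)/(n·log₂ K) → 1 as n → ∞; and (iii) M_n ≤ N_n for all n. Let a random vertex subset S_n ⊆ V(G_n) be chosen by including each vertex independently with probability M_n/N_n. Then for every c > 0 there exists n₀ such that for all n ≥ n₀, the probability that the number of vertices X ∈ S_n for which there exists Y ∈ S_n with a directed edge from Y to X in G_n exceeds ε_n·|S_n| is at most 2^{−cn}. -/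
/-!
Write `p = M / N` and `d = N r`, and call a vertex of `S` dominated if it has an in-neighbour in
`S`. By Chernoff, `|S|` is at least `2s / ε` outside an event of doubly exponentially small
probability, for any constant `s` fixed in advance; then more than `ε |S|` dominated vertices means
at least `2s` of them.

To bound the probability of having `2s` dominated vertices, expose `S` greedily. If `W ⊆ S` has
fewer vertices than there are dominated ones, then some edge `y → x` inside `S` has its head `x`
outside `W`, and we may replace `W` by `W ∪ {x, y}`. There are at most `|W| d` such edges with
`y ∈ W`, each costing a factor `p` in probability, and at most `N d` with `y ∉ W`, each costing
`p²`. So every step costs a factor `p d (2s + p N) ≤ (2s + 1) p² N d = (2s + 1) M² r`, and `s` steps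
are possible because each adds at most two vertices. Large indegrees are harmless, since only edges
whose head is new are counted. As `M² r`, which bounds the expected number of edges inside `S`, is
exponentially small, its `s`-th power beats any given `2 ^ (-c n)`.
-/

open scoped Classical

/-- The probability, under the product Bernoulli measure in which each vertex of
`Fin N` is included independently with probability `p`, that the random subset
satisfies the event `E`. -/
noncomputable def subsetProb (N : ℕ) (p : ℝ) (E : Finset (Fin N) → Prop) : ℝ :=
  ∑ S : Finset (Fin N), if E S then p ^ S.card * (1 - p) ^ (N - S.card) else 0

section RandomSubset

open Finset

variable {V : Type*} [Fintype V] {p : ℝ}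

/-- The mass of `S` under the law of the random subset of `V` that contains each element
independently with probability `p`. -/
noncomputable def bernoulliWeight (p : ℝ) (S : Finset V) : ℝ :=
  p ^ #S * (1 - p) ^ (Fintype.card V - #S)

/-- The probability that the random subset of `V` containing each element independently with
probability `p` satisfies `E`. This is `subsetProb` for an arbitrary finite vertex type. -/
noncomputable def bernoulliProb (p : ℝ) (E : Finset V → Prop) : ℝ :=
  ∑ S, if E S then bernoulliWeight p S else 0

lemma subsetProb_eq_bernoulliProb (N : ℕ) (p : ℝ) (E : Finset (Fin N) → Prop) :
    subsetProb N p E = bernoulliProb p E := by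
  simp only [subsetProb, bernoulliProb, bernoulliWeight, Fintype.card_fin]

lemma bernoulliWeight_nonneg (hp0 : 0 ≤ p) (hp1 : p ≤ 1) (S : Finset V) :
    0 ≤ bernoulliWeight p S :=
  mul_nonneg (pow_nonneg hp0 _) (pow_nonneg (sub_nonneg.2 hp1) _)

lemma bernoulliProb_mono (hp0 : 0 ≤ p) (hp1 : p ≤ 1) {E F : Finset V → Prop}
    (h : ∀ S, E S → F S) : bernoulliProb p E ≤ bernoulliProb p F := by
  refine sum_le_sum fun S _ => ?_
  have hw := bernoulliWeight_nonneg hp0 hp1 S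
  have := h S
  split_ifs <;> first | exact le_rfl | exact hw | tauto

lemma bernoulliProb_le_add_of_imp_or (hp0 : 0 ≤ p) (hp1 : p ≤ 1) {E A B : Finset V → Prop}
    (h : ∀ S, E S → A S ∨ B S) :
    bernoulliProb p E ≤ bernoulliProb p A + bernoulliProb p B := by
  simp only [bernoulliProb, ← sum_add_distrib]
  refine sum_le_sum fun S _ => ?_
  have hw := bernoulliWeight_nonneg hp0 hp1 S
  have := h S
  split_ifs <;> first | linarith | tauto

lemma bernoulliProb_le_sum_of_imp_exists (hp0 : 0 ≤ p) (hp1 : p ≤ 1) {ι : Type*} {t : Finset ι}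
    {E : Finset V → Prop} {F : ι → Finset V → Prop} (h : ∀ S, E S → ∃ i ∈ t, F i S) :
    bernoulliProb p E ≤ ∑ i ∈ t, bernoulliProb p (F i) := by
  simp only [bernoulliProb]
  rw [sum_comm]
  refine sum_le_sum fun S _ => ?_
  have hterm : ∀ i ∈ t, 0 ≤ if F i S then bernoulliWeight p S else 0 := fun i _ =>
    ite_nonneg (bernoulliWeight_nonneg hp0 hp1 S) le_rfl
  split_ifs with hE
  · obtain ⟨i, hi, hFi⟩ := h S hE
    exact (if_pos hFi).symm.trans_le (single_le_sum hterm hi)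
  · exact sum_nonneg hterm

lemma bernoulliProb_le_sum_mul_of_one_le (hp0 : 0 ≤ p) (hp1 : p ≤ 1) {E : Finset V → Prop}
    {f : Finset V → ℝ} (hf : ∀ S, 0 ≤ f S) (h : ∀ S, E S → 1 ≤ f S) :
    bernoulliProb p E ≤ ∑ S, bernoulliWeight p S * f S := by
  refine sum_le_sum fun S _ => ?_
  have hw := bernoulliWeight_nonneg hp0 hp1 S
  split_ifs with hE
  · exact le_mul_of_one_le_right hw (h S hE)
  · exact mul_nonneg hw (hf S)

lemma bernoulliProb_superset (p : ℝ) (W : Finset V) :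
    bernoulliProb p (fun S => W ⊆ S) = p ^ #W := by
  -- Expand `∏ i, (p + g i)`, where `g` vanishes on `W` and is `1 - p` off `W`.
  have hexpand : bernoulliProb p (fun S => W ⊆ S) =
      ∑ S, (∏ _i ∈ S, p) * ∏ i ∈ Sᶜ, if i ∈ W then 0 else 1 - p := by
    refine sum_congr rfl fun S _ => ?_
    split_ifs with hWS
    · rw [bernoulliWeight, prod_const, prod_congr rfl fun i hi => if_neg fun hiW =>
        mem_compl.1 hi (hWS hiW), prod_const, card_compl]
    · obtain ⟨i, hiW, hiS⟩ := not_subset.1 hWS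
      rw [prod_eq_zero (mem_compl.2 hiS) (by rw [if_pos hiW]), mul_zero]
  have hfactor (i : V) : (p + if i ∈ W then 0 else 1 - p) = if i ∈ W then p else 1 := by
    split_ifs <;> ring
  rw [hexpand, ← Fintype.prod_add]
  simp only [hfactor, prod_ite_mem, univ_inter, prod_const]

lemma sum_bernoulliWeight_mul_pow_card (p t : ℝ) :
    ∑ S : Finset V, bernoulliWeight p S * t ^ #S = (p * t + (1 - p)) ^ Fintype.card V := by
  rw [← Fintype.sum_pow_mul_eq_add_pow]
  refine sum_congr rfl fun S _ => ?_
  rw [bernoulliWeight, mul_pow]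
  ring

lemma bernoulliProb_card_lt_le_exp (hp0 : 0 ≤ p) (hp1 : p ≤ 1) {θ : ℝ} (hθ : 0 ≤ θ) (a : ℝ) :
    bernoulliProb p (fun S : Finset V => (#S : ℝ) < a) ≤
      Real.exp (θ * a - (1 - Real.exp (-θ)) * (p * Fintype.card V)) := by
  have hmarkov : bernoulliProb p (fun S : Finset V => (#S : ℝ) < a) ≤
      ∑ S : Finset V, bernoulliWeight p S * (Real.exp (θ * a) * Real.exp (-θ) ^ #S) := by
    refine bernoulliProb_le_sum_mul_of_one_le hp0 hp1 (fun S => by positivity) fun S hS => ?_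
    rw [← Real.exp_nat_mul, ← Real.exp_add, Real.one_le_exp_iff]
    nlinarith
  have hbase : p * Real.exp (-θ) + (1 - p) ≤ Real.exp (-((1 - Real.exp (-θ)) * p)) := by
    linarith [Real.add_one_le_exp (-((1 - Real.exp (-θ)) * p))]
  have hbase_nonneg : 0 ≤ p * Real.exp (-θ) + (1 - p) :=
    add_nonneg (by positivity) (sub_nonneg.2 hp1)
  calc bernoulliProb p (fun S : Finset V => (#S : ℝ) < a)
      ≤ Real.exp (θ * a) * (p * Real.exp (-θ) + (1 - p)) ^ Fintype.card V := by
        simpa only [mul_left_comm (bernoulliWeight p _), ← mul_sum,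
          sum_bernoulliWeight_mul_pow_card] using hmarkov
    _ ≤ Real.exp (θ * a) * Real.exp (-((1 - Real.exp (-θ)) * p)) ^ Fintype.card V :=
        mul_le_mul_of_nonneg_left (pow_le_pow_left₀ hbase_nonneg hbase _) (Real.exp_pos _).le
    _ = Real.exp (θ * a - (1 - Real.exp (-θ)) * (p * Fintype.card V)) := by
        rw [← Real.exp_nat_mul, ← Real.exp_add]
        ring_nf

end RandomSubset

section Exploration

open Finset

variable {V : Type*} {D : V → V → Prop}

/-- The vertices of `S` that are dominated within `S`, i.e. that have an in-neighbour in `S`. -/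
noncomputable def dominatedVertices (D : V → V → Prop) (S : Finset V) : Finset V :=
  S.filter fun x => ∃ y ∈ S, D y x

lemma pow_card_insert_insert (hirr : ∀ v, ¬ D v v) (p : ℝ) {W : Finset V} {y x : V}
    (hyx : D y x) (hxW : x ∉ W) :
    p ^ #(insert x (insert y W)) = p ^ #W * (p * if y ∈ W then 1 else p) := by
  have hne : x ≠ y := fun h => hirr y (h ▸ hyx)
  have hx : x ∉ insert y W := by simp [hne, hxW]
  rw [card_insert_of_notMem hx]
  split_ifs with hyW
  · rw [insert_eq_of_mem hyW, pow_succ, mul_one]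
  · rw [card_insert_of_notMem hyW]
    ring

variable [Fintype V] {p d : ℝ}

/-- The edges of `D` with head outside `W`, as pairs `⟨tail, head⟩`. -/
noncomputable def edgesHeadNotMem (D : V → V → Prop) (W : Finset V) : Finset (Σ _ : V, V) :=
  univ.sigma fun y => {x | D y x ∧ x ∉ W}

lemma exists_edgesHeadNotMem_insert_subset {S W : Finset V} (hWS : W ⊆ S)
    (hcard : #W < #(dominatedVertices D S)) :
    ∃ e ∈ edgesHeadNotMem D W, insert e.2 (insert e.1 W) ⊆ S := by
  obtain ⟨x, hx, hxW⟩ := exists_mem_notMem_of_card_lt_card hcard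
  obtain ⟨hxS, y, hyS, hyx⟩ := mem_filter.1 hx
  exact ⟨⟨y, x⟩, by simp [edgesHeadNotMem, hyx, hxW],
    insert_subset hxS (insert_subset hyS hWS)⟩

lemma sum_edgesHeadNotMem_pow_card_le (hp0 : 0 ≤ p) (hd : 0 ≤ d) (hirr : ∀ v, ¬ D v v)
    (hdeg : ∀ v, (#{w | D v w} : ℝ) ≤ d) (W : Finset V) :
    ∑ e ∈ edgesHeadNotMem D W, p ^ #(insert e.2 (insert e.1 W)) ≤
      p ^ #W * (p * d * (#W + p * Fintype.card V)) := by
  have hout (y : V) : (#{x | D y x ∧ x ∉ W} : ℝ) ≤ d :=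
    le_trans (mod_cast card_le_card (monotone_filter_right _ fun _ _ h => h.1)) (hdeg y)
  calc ∑ e ∈ edgesHeadNotMem D W, p ^ #(insert e.2 (insert e.1 W))
      = ∑ y, ∑ x with D y x ∧ x ∉ W, p ^ #(insert x (insert y W)) := sum_sigma _ _ _
    _ = ∑ y, #{x | D y x ∧ x ∉ W} * (p ^ #W * (p * if y ∈ W then 1 else p)) := by
        refine sum_congr rfl fun y _ => ?_
        rw [← nsmul_eq_mul]
        refine sum_eq_card_nsmul fun x hx => ?_
        obtain ⟨hyx, hxW⟩ := (mem_filter.1 hx).2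
        exact pow_card_insert_insert hirr p hyx hxW
    _ ≤ ∑ y, d * (p ^ #W * (p * ((if y ∈ W then 1 else 0) + p))) := by
        gcongr with y
        · exact hout y
        · split_ifs <;> linarith
    _ = p ^ #W * (p * d * (#W + p * Fintype.card V)) := by
        simp only [← mul_sum, sum_add_distrib, sum_boole, filter_univ_mem, sum_const, card_univ,
          nsmul_eq_mul]
        ring

-- `k` is the number of exploration steps still to be made from `W`.
lemma bernoulliProb_superset_and_le_card_dominatedVertices (hp0 : 0 ≤ p) (hp1 : p ≤ 1) (hd : 0 ≤ d)
    (hirr : ∀ v, ¬ D v v) (hdeg : ∀ v, (#{w | D v w} : ℝ) ≤ d) {m k : ℕ} {W : Finset V}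
    (hm : #W + 2 * k ≤ m) :
    bernoulliProb p (fun S => W ⊆ S ∧ m ≤ #(dominatedVertices D S)) ≤
      p ^ #W * (p * d * (m + p * Fintype.card V)) ^ k := by
  induction k generalizing W with
  | zero =>
    rw [pow_zero, mul_one, ← bernoulliProb_superset]
    exact bernoulliProb_mono hp0 hp1 fun S hS => hS.1
  | succ k ih =>
    let q := p * d * (m + p * Fintype.card V)
    have hWm : (#W : ℝ) ≤ m := by exact_mod_cast (by omega : #W ≤ m)
    calc bernoulliProb p (fun S => W ⊆ S ∧ m ≤ #(dominatedVertices D S))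
        ≤ ∑ e ∈ edgesHeadNotMem D W, bernoulliProb p (fun S =>
            insert e.2 (insert e.1 W) ⊆ S ∧ m ≤ #(dominatedVertices D S)) := by
          refine bernoulliProb_le_sum_of_imp_exists hp0 hp1 fun S ⟨hWS, hmS⟩ => ?_
          obtain ⟨e, he, heS⟩ := exists_edgesHeadNotMem_insert_subset hWS
            (show #W < #(dominatedVertices D S) by omega)
          exact ⟨e, he, heS, hmS⟩
      _ ≤ ∑ e ∈ edgesHeadNotMem D W, p ^ #(insert e.2 (insert e.1 W)) * q ^ k := by
          refine sum_le_sum fun e _ => ih ?_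
          have := card_insert_le e.2 (insert e.1 W)
          have := card_insert_le e.1 W
          omega
      _ ≤ p ^ #W * (p * d * (#W + p * Fintype.card V)) * q ^ k := by
          rw [← sum_mul]
          gcongr
          exact sum_edgesHeadNotMem_pow_card_le hp0 hd hirr hdeg W
      _ ≤ p ^ #W * (p * d * (m + p * Fintype.card V)) * q ^ k := by gcongr
      _ = p ^ #W * q ^ (k + 1) := by ring

lemma bernoulliProb_mul_card_lt_card_dominatedVertices_le (hp0 : 0 ≤ p) (hp1 : p ≤ 1) (hd : 0 ≤ d)
    (hirr : ∀ v, ¬ D v v) (hdeg : ∀ v, (#{w | D v w} : ℝ) ≤ d) {s : ℕ} {ε a : ℝ} (hε : 0 ≤ ε)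
    (ha : 2 * s ≤ ε * a) :
    bernoulliProb p (fun S => ε * #S < #(dominatedVertices D S)) ≤
      Real.exp (a - p * Fintype.card V / 2) + (p * d * (2 * s + p * Fintype.card V)) ^ s := by
  have hsplit (S : Finset V) (hS : ε * #S < #(dominatedVertices D S)) :
      (#S : ℝ) < a ∨ ∅ ⊆ S ∧ 2 * s ≤ #(dominatedVertices D S) := by
    refine or_iff_not_imp_left.2 fun haS => ⟨empty_subset S, ?_⟩
    have : ε * a ≤ ε * #S := mul_le_mul_of_nonneg_left (not_lt.1 haS) hε
    exact_mod_cast ha.trans (this.trans hS.le)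
  refine (bernoulliProb_le_add_of_imp_or hp0 hp1 hsplit).trans (add_le_add ?_ ?_)
  · refine (bernoulliProb_card_lt_le_exp hp0 hp1 zero_le_one a).trans (Real.exp_le_exp.2 ?_)
    have : 0 ≤ p * Fintype.card V := by positivity
    nlinarith [Real.exp_neg_one_lt_half]
  · simpa using bernoulliProb_superset_and_le_card_dominatedVertices hp0 hp1 hd hirr hdeg
      (m := 2 * s) (k := s) (W := ∅) (by simp)

lemma bernoulliProb_mul_card_lt_card_dominatedVertices_le_of_one_le {M r x : ℝ}
    (hM : 1 ≤ M) (hMV : M ≤ Fintype.card V) (hirr : ∀ v, ¬ D v v)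
    (hdeg : ∀ v, (#{w | D v w} : ℝ) ≤ Fintype.card V * r) (hx : M ^ 2 * r ≤ x) {s : ℕ}
    {ε a : ℝ} (hε : 0 ≤ ε) (ha : 2 * s ≤ ε * a) :
    bernoulliProb (M / Fintype.card V) (fun S => ε * #S < #(dominatedVertices D S)) ≤
      Real.exp (a - M / 2) + ((2 * s + 1) * x) ^ s := by
  have hV : (0 : ℝ) < Fintype.card V := by linarith
  obtain ⟨v⟩ := Fintype.card_pos_iff.1 (Nat.cast_pos.1 hV)
  have hd : 0 ≤ Fintype.card V * r := (Nat.cast_nonneg _).trans (hdeg v)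
  have hr : 0 ≤ r := nonneg_of_mul_nonneg_right hd hV
  have hpV : M / Fintype.card V * Fintype.card V = M := div_mul_cancel₀ _ hV.ne'
  have hstep : M / Fintype.card V * (Fintype.card V * r) * (2 * s + M) ≤ (2 * s + 1) * x :=
    calc M / Fintype.card V * (Fintype.card V * r) * (2 * s + M)
        = M * r * (2 * s * 1 + M) := by rw [← mul_assoc, hpV, mul_one]
      _ ≤ M * r * (2 * s * M + M) := by gcongr
      _ = (2 * s + 1) * (M ^ 2 * r) := by ring
      _ ≤ (2 * s + 1) * x := by gcongr
  have hbound := bernoulliProb_mul_card_lt_card_dominatedVertices_le (by positivity)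
    ((div_le_one hV).2 hMV) hd hirr hdeg hε ha
  rw [hpV] at hbound
  refine hbound.trans ?_
  gcongr

end Exploration

section Asymptotics

open Finset Filter Asymptotics

lemma eventually_mul_two_rpow_add_mul_le {γ δ : ℝ} (hγ : 0 < γ) (hδ : δ < γ) (A B : ℝ) :
    ∀ᶠ n : ℕ in atTop, A * 2 ^ (δ * n) + B * n ≤ (2 : ℝ) ^ (γ * n) := by
  have hpow (b : ℝ) (n : ℕ) : (2 : ℝ) ^ (b * n) = ((2 : ℝ) ^ b) ^ n := by
    rw [Real.rpow_mul two_pos.le, Real.rpow_natCast]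
  have hexp : (fun n : ℕ => ((2 : ℝ) ^ δ) ^ n) =o[atTop] fun n => ((2 : ℝ) ^ γ) ^ n :=
    isLittleO_pow_pow_of_lt_left (by positivity) (Real.rpow_lt_rpow_of_exponent_lt one_lt_two hδ)
  have hlin : (fun n : ℕ => (n : ℝ)) =o[atTop] fun n => ((2 : ℝ) ^ γ) ^ n :=
    isLittleO_coe_const_pow_of_one_lt (Real.one_lt_rpow one_lt_two hγ)
  filter_upwards [((hexp.const_mul_left A).add (hlin.const_mul_left B)).bound one_pos] with n hn
  rw [hpow, hpow]
  simpa [abs_of_pos (Real.rpow_pos_of_pos two_pos γ)] using (le_abs_self _).trans hn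

lemma eventually_exp_mul_two_rpow_sub_le {γ δ : ℝ} (hγ : 0 < γ) (hδ : δ < γ) (A b : ℝ) :
    ∀ᶠ n : ℕ in atTop,
      Real.exp (A * 2 ^ (δ * n) - 2 ^ (γ * n) / 2) ≤ (2 : ℝ) ^ (-(b * n)) := by
  filter_upwards [eventually_mul_two_rpow_add_mul_le hγ hδ (2 * A) (2 * (Real.log 2 * b))]
    with n hn
  rw [Real.rpow_def_of_pos two_pos (-(b * n)), Real.exp_le_exp]
  linarith

lemma eventually_mul_two_rpow_pow_le {κ b : ℝ} {s : ℕ} (hb : b < κ * s) (A : ℝ) :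
    ∀ᶠ n : ℕ in atTop, (A * (2 : ℝ) ^ (-(κ * n))) ^ s ≤ (2 : ℝ) ^ (-(b * n)) := by
  have hκb : 0 < κ * s - b := sub_pos.2 hb
  filter_upwards [eventually_mul_two_rpow_add_mul_le hκb hκb (A ^ s) 0] with n hn
  have hA : A ^ s ≤ (2 : ℝ) ^ ((κ * s - b) * n) := by simpa using hn
  calc (A * (2 : ℝ) ^ (-(κ * n))) ^ s = A ^ s * 2 ^ (-(κ * n) * s) := by
        rw [mul_pow, Real.rpow_mul_natCast two_pos.le]
    _ ≤ 2 ^ ((κ * s - b) * n) * 2 ^ (-(κ * n) * s) := by gcongr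
    _ = 2 ^ (-(b * n)) := by
        rw [← Real.rpow_add two_pos]
        ring_nf

lemma eventually_sq_mul_le_two_rpow {β γ κ : ℝ} (hκ : 2 * γ + κ < β) {r : ℕ → ℝ}
    (hr : ∀ n, 0 < r n) (h : Tendsto (fun n : ℕ => -Real.logb 2 (r n) / n) atTop (nhds β)) :
    ∀ᶠ n : ℕ in atTop, ((2 : ℝ) ^ (γ * n)) ^ 2 * r n ≤ 2 ^ (-(κ * n)) := by
  filter_upwards [h.eventually (lt_mem_nhds hκ), eventually_gt_atTop 0] with n hlog hn
  have hn' : (0 : ℝ) < n := Nat.cast_pos.2 hn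
  have hrn : r n ≤ 2 ^ (-((2 * γ + κ) * n)) := by
    rw [lt_div_iff₀ hn'] at hlog
    exact (Real.logb_le_iff_le_rpow one_lt_two (hr n)).1 (by linarith)
  calc ((2 : ℝ) ^ (γ * n)) ^ 2 * r n
      ≤ ((2 : ℝ) ^ (γ * n)) ^ 2 * 2 ^ (-((2 * γ + κ) * n)) := by gcongr
    _ = 2 ^ (-(κ * n)) := by
        rw [← Real.rpow_mul_natCast two_pos.le, ← Real.rpow_add two_pos]
        push_cast
        ring_nf

theorem sparse_directed_subgraph_whp_general {γ δ κ : ℝ} (hγ : 0 < γ) (hδ : δ < γ) (hκ : 0 < κ)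
    {V : ℕ → Type*} [∀ n, Fintype (V n)] {D : ∀ n, V n → V n → Prop} (hirr : ∀ n v, ¬ D n v v)
    {r ε M : ℕ → ℝ} (hε : ∀ᶠ n : ℕ in atTop, (2 : ℝ) ^ (-(δ * n)) ≤ ε n)
    (hM : ∀ᶠ n : ℕ in atTop, (2 : ℝ) ^ (γ * n) ≤ M n)
    (hMV : ∀ᶠ n in atTop, M n ≤ Fintype.card (V n))
    (hdeg : ∀ᶠ n in atTop, ∀ v : V n, (#{w | D n v w} : ℝ) ≤ Fintype.card (V n) * r n)
    (hr : ∀ᶠ n : ℕ in atTop, M n ^ 2 * r n ≤ 2 ^ (-(κ * n))) (c : ℝ) :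
    ∀ᶠ n : ℕ in atTop, bernoulliProb (M n / Fintype.card (V n))
      (fun S => ε n * #S < #(dominatedVertices (D n) S)) ≤ 2 ^ (-(c * n)) := by
  obtain ⟨s, hs⟩ := exists_nat_gt ((c + 1) / κ)
  rw [div_lt_iff₀' hκ] at hs
  filter_upwards [hε, hM, hMV, hdeg, hr, eventually_ge_atTop 1,
    eventually_exp_mul_two_rpow_sub_le hγ hδ (2 * s) (c + 1),
    eventually_mul_two_rpow_pow_le hs (2 * s + 1)] with n hε hM hMV hdeg hr hn htail hpow
  have hn' : (1 : ℝ) ≤ n := by exact_mod_cast hn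
  have hM1 : 1 ≤ M n := (Real.one_le_rpow one_le_two (by positivity)).trans hM
  have ha : 2 * s ≤ ε n * (2 * s * (2 : ℝ) ^ (δ * n)) :=
    calc (2 * s : ℝ) = 2 ^ (-(δ * n)) * (2 * s * (2 : ℝ) ^ (δ * n)) := by
          rw [mul_left_comm, ← Real.rpow_add two_pos, neg_add_cancel, Real.rpow_zero, mul_one]
      _ ≤ ε n * (2 * s * (2 : ℝ) ^ (δ * n)) := by gcongr
  calc bernoulliProb (M n / Fintype.card (V n))
        (fun S => ε n * #S < #(dominatedVertices (D n) S))
      ≤ Real.exp (2 * s * 2 ^ (δ * n) - M n / 2) + ((2 * s + 1) * 2 ^ (-(κ * n))) ^ s :=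
        bernoulliProb_mul_card_lt_card_dominatedVertices_le_of_one_le hM1 hMV (hirr n) hdeg hr
          (le_trans (by positivity) hε) ha
    _ ≤ 2 ^ (-((c + 1) * n)) + 2 ^ (-((c + 1) * n)) := by
        refine add_le_add (le_trans ?_ htail) hpow
        gcongr
    _ = 2 ^ (1 + -((c + 1) * n)) := by rw [Real.rpow_add two_pos, Real.rpow_one, two_mul]
    _ ≤ 2 ^ (-(c * n)) := Real.rpow_le_rpow_of_exponent_le one_le_two (by linarith)

end Asymptotics

/-- If a sequence of loopless directed graphs `D_n` on `N_n = K^{(1−o(1))n}` vertices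
has maximum outdegree at most `N_n·r_n` with `r_n = 2^{−(β−o(1))n}`, and a random
subset `S_n` is chosen by including each vertex independently with probability
`M_n/N_n` where `M_n = 2^{γn}`, `γ = β/4`, then for `ε_n ≥ 2^{−γn/2}` the probability
that more than `ε_n·|S_n|` vertices `X ∈ S_n` have an in-neighbor in `S_n` is
`2^{−ω(n)}`. -/
theorem sparse_directed_subgraph_whp (β : ℝ) (hβ0 : 0 < β) (hβ1 : β < 1)
    (γ : ℝ) (hγ : γ = β / 4) (K : ℕ) (hK : 2 ≤ K)
    (N : ℕ → ℕ) (hN : ∀ n, 0 < N n)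
    (D : ∀ n, Fin (N n) → Fin (N n) → Prop)
    (hirr : ∀ n, ∀ v : Fin (N n), ¬ D n v v)
    (r : ℕ → ℝ) (hr : ∀ n, 0 < r n)
    (ε : ℕ → ℝ) (hεlb : ∀ n : ℕ, (2 : ℝ) ^ (-γ * (n : ℝ) / 2) ≤ ε n)
    (M : ℕ → ℝ) (hM : ∀ n, M n = 2 ^ (γ * n))
    (hdeg : ∀ n, ∀ v : Fin (N n),
      ((Finset.univ.filter (fun w => D n v w)).card : ℝ) ≤ (N n : ℝ) * r n)
    (h1 : Filter.Tendsto (fun n => -Real.logb 2 (r n) / n) Filter.atTop (nhds β))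
    (h2 : Filter.Tendsto (fun n => Real.logb 2 (N n) / (n * Real.logb 2 K))
      Filter.atTop (nhds 1))
    (h3 : ∀ n, M n ≤ (N n : ℝ)) :
    ∀ c : ℝ, 0 < c → ∃ n₀ : ℕ, ∀ n ≥ n₀,
      subsetProb (N n) (M n / N n)
        (fun S => ε n * S.card <
          ((S.filter (fun x => ∃ y ∈ S, D n y x)).card : ℝ))
        ≤ 2 ^ (-c * n) := by
  intro c _
  obtain rfl : M = fun n : ℕ => (2 : ℝ) ^ (γ * n) := funext hM
  have hγ0 : 0 < γ := by linarith
  have hwhp := sparse_directed_subgraph_whp_general (δ := γ / 2) (κ := β / 4) hγ0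
    (half_lt_self hγ0) (by positivity) hirr
    (.of_forall fun n => (hεlb n).trans' (by ring_nf; rfl)) (.of_forall fun _ => le_rfl)
    (.of_forall fun n => by simpa using h3 n) (.of_forall fun n => by simpa using hdeg n)
    (eventually_sq_mul_le_two_rpow (by linarith) hr h1) c
  simp only [Fintype.card_fin, ← subsetProb_eq_bernoulliProb, ← neg_mul,
    dominatedVertices] at hwhp
  convert Filter.eventually_atTop.1 hwhp
end

section
/- The adversarial zero-rate threshold p0_adv equals 1/2 if and only if the deterministic zero-rate threshold for online deletions p0_on,d equals 1/2. -/
/-!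
If every two codewords have a short longest common subsequence, decoding to any codeword that
contains the received word is correct; hence `p0adv ≤ p0ond`. A channel that keeps only the
majority bit of a codeword gives `p0ond ≤ 1/2`. The content of the theorem is the bound
`p0ond ≤ (p0adv + 1/2)/2`.

Let `q ≤ 1/2` be adversarially bad and cut the codewords of length `n` in the middle. In a quarter
of the code, all prefixes have the same majority bit, and so do all suffixes.

* If many of these words share their prefix with another one, the channel transmits the prefix and
  reduces the suffix to a fixed power of its majority bit, at a cost of about `n/4` deletions.
* Otherwise many of them are determined by their prefix, so that after the prefix the channel knows
  the future. It reduces the prefix to a fixed power of its majority bit. As `q` is adversarially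
  bad, all but few of the suffixes can be grouped so that those in a group have a common
  subsequence of length at least `(1 - q)n/2`, which is what the channel outputs. The cost is about
  `n/4 + qn/2 = (q + 1/2)n/2`.

In both cases a positive fraction of the code consists of words whose output is shared with another
word, which forces a constant fraction of decoding errors.
-/

open scoped Classical

/-- `advGood p` : there is a rate `δ > 0` such that for infinitely many `n` there is a
code `C ⊆ {0,1}^n` of size at least `2^{δn}` in which every two distinct codewords
have longest common subsequence of length less than `(1−p)n`. -/
def advGood (p : ℝ) : Prop :=
  ∃ δ : ℝ, 0 < δ ∧ ∀ n₀ : ℕ, ∃ n ≥ n₀, ∃ C : Finset (List Bool),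
    (∀ c ∈ C, c.length = n) ∧ (C.card : ℝ) ≥ 2 ^ (δ * n) ∧
    ∀ x ∈ C, ∀ y ∈ C, x ≠ y →
      ∀ z : List Bool, z.Sublist x → z.Sublist y → (z.length : ℝ) < (1 - p) * n

/-- The zero-rate threshold for adversarial deletions. -/
noncomputable def p0adv : ℝ := sSup {p : ℝ | p ∈ Set.Icc (0 : ℝ) 1 ∧ advGood p}

/-- The output of the deterministic online deletion channel described by `f` on input
`x`: bit `x_i` is transmitted iff `f` applied to the prefix `x_1…x_i` returns `true`. -/
def onlineOutput (f : List Bool → Bool) (x : List Bool) : List Bool :=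
  (List.range x.length).filterMap
    (fun i => if f (x.take (i + 1)) then some (x.getD i false) else none)

/-- The online channel `f` deletes at most `pn` bits on every input of length `n`. -/
def deletesAtMost (f : List Bool → Bool) (n : ℕ) (p : ℝ) : Prop :=
  ∀ x : List Bool, x.length = n → ((n - (onlineOutput f x).length : ℕ) : ℝ) ≤ p * n

/-- `onGood p` : there is a rate `δ > 0` such that for every `ε > 0` there are
infinitely many `n` admitting a code `C ⊆ {0,1}^n` of size at least `2^{δn}` and a
decoder `Dec` into `C` such that every deterministic online deletion channel deleting
at most `pn` bits on every input miscommunicates at most `ε|C|` codewords. -/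
def onGood (p : ℝ) : Prop :=
  ∃ δ : ℝ, 0 < δ ∧ ∀ ε : ℝ, 0 < ε → ∀ n₀ : ℕ, ∃ n ≥ n₀, ∃ C : Finset (List Bool),
    (∀ c ∈ C, c.length = n) ∧ (C.card : ℝ) ≥ 2 ^ (δ * n) ∧
    ∃ Dec : List Bool → List Bool, (∀ s, Dec s ∈ C) ∧
      ∀ f : List Bool → Bool, deletesAtMost f n p →
        ((C.filter (fun c => Dec (onlineOutput f c) ≠ c)).card : ℝ) ≤ ε * C.card

/-- The deterministic zero-rate threshold for online deletions. -/
noncomputable def p0ond : ℝ := sSup {p : ℝ | p ∈ Set.Icc (0 : ℝ) 1 ∧ onGood p}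

open Filter

section Confusion

variable {α β : Type*}

/-- `Confuses φ S`: no element of `S` can be recovered from its image under `φ`, since another
element of `S` has the same image. For `φ` the output map of a channel, this is what defeats every
decoder on half of `S`. -/
def Confuses (φ : α → β) (S : Finset α) : Prop :=
  ∀ x ∈ S, ∃ y ∈ S, y ≠ x ∧ φ y = φ x

lemma Confuses.card_le_two_mul_card_filter_ne [DecidableEq α] {φ : α → β} {S : Finset α}
    (h : Confuses φ S) (dec : β → α) : S.card ≤ 2 * (S.filter fun x => dec (φ x) ≠ x).card := by
  choose! π hπS hπne hπ using h
  have hdec : ∀ x ∈ S.filter (fun x => ¬ dec (φ x) ≠ x), dec (φ (π x)) = x := fun x hx => by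
    obtain ⟨hxS, hx⟩ := Finset.mem_filter.mp hx
    rw [hπ x hxS, not_not.mp hx]
  have hcorrect_le : (S.filter fun x => ¬ dec (φ x) ≠ x).card ≤
      (S.filter fun x => dec (φ x) ≠ x).card := by
    refine Finset.card_le_card_of_injOn π (fun x hx => ?_) fun x hx y hy hxy => ?_
    · have hxS := (Finset.mem_filter.mp hx).1
      exact Finset.mem_filter.mpr ⟨hπS x hxS, (hdec x hx).trans_ne (hπne x hxS).symm⟩
    · rw [← hdec x hx, ← hdec y hy, hxy]
  have hsplit := S.card_filter_add_card_filter_not fun x => dec (φ x) ≠ x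
  omega

lemma card_le_two_mul_card_filter_or_filter_not (P : α → Prop) [DecidablePred P] (C : Finset α) :
    C.card ≤ 2 * (C.filter P).card ∨ C.card ≤ 2 * (C.filter fun x => ¬ P x).card := by
  have hsplit := C.card_filter_add_card_filter_not P
  omega

lemma exists_subset_confuses_or_injOn (φ : α → β) (C : Finset α) :
    ∃ S ⊆ C, C.card ≤ 2 * S.card ∧ (Confuses φ S ∨ Set.InjOn φ S) := by
  rcases card_le_two_mul_card_filter_or_filter_not (fun x => ∃ y ∈ C, y ≠ x ∧ φ y = φ x) C
    with hcard | hcard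
  · refine ⟨_, Finset.filter_subset _ _, hcard, Or.inl fun x hx => ?_⟩
    obtain ⟨hxC, y, hyC, hne, hy⟩ := Finset.mem_filter.mp hx
    exact ⟨y, Finset.mem_filter.mpr ⟨hyC, x, hxC, hne.symm, hy.symm⟩, hne, hy⟩
  · refine ⟨_, Finset.filter_subset _ _, hcard, Or.inr fun x hx y hy hxy => ?_⟩
    by_contra hne
    exact (Finset.mem_filter.mp hy).2 ⟨x, (Finset.mem_filter.mp hx).1, hne, hxy⟩

lemma exists_subset_confuses_forall_sdiff [DecidableEq α] [Nonempty β] (P : β → α → Prop)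
    (L : Finset α) :
    ∃ S ⊆ L, ∃ z : α → β, (∀ x ∈ S, P (z x) x) ∧ Confuses z S ∧
      ∀ x ∈ L \ S, ∀ y ∈ L \ S, x ≠ y → ∀ w, P w x → ¬ P w y := by
  let paired := {S | S ⊆ L ∧ ∃ z : α → β, (∀ x ∈ S, P (z x) x) ∧ Confuses z S}
  have hfinite : paired.Finite :=
    L.powerset.finite_toSet.subset fun S hS => Finset.mem_powerset.mpr hS.1
  obtain ⟨S, ⟨hSL, z, hz, hconf⟩, hmax⟩ :=
    hfinite.exists_maximal ⟨∅, by simp [paired, Confuses]⟩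
  refine ⟨S, hSL, z, hz, hconf, fun x hx y hy hxy w hwx hwy => ?_⟩
  obtain ⟨hxL, hxS⟩ := Finset.mem_sdiff.mp hx
  obtain ⟨hyL, hyS⟩ := Finset.mem_sdiff.mp hy
  let z' : α → β := fun v => if v ∈ S then z v else w
  have hz'S : ∀ v ∈ S, z' v = z v := fun v hv => if_pos hv
  have hz'x : z' x = w := if_neg hxS
  have hz'y : z' y = w := if_neg hyS
  have hextend : insert x (insert y S) ∈ paired := by
    refine ⟨by simp only [Finset.insert_subset_iff, hxL, hyL, hSL, and_self], z', ?_, ?_⟩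
    · simp only [Finset.forall_mem_insert, hz'x, hz'y]
      exact ⟨hwx, hwy, fun v hv => by rw [hz'S v hv]; exact hz v hv⟩
    · simp only [Confuses, Finset.forall_mem_insert, hz'x, hz'y]
      refine ⟨⟨y, by simp, hxy.symm, hz'y⟩, ⟨x, by simp, hxy, hz'x⟩, fun v hv => ?_⟩
      obtain ⟨u, hu, hne, huv⟩ := hconf v hv
      exact ⟨u, by simp [hu], hne, by rw [hz'S u hu, hz'S v hv, huv]⟩
  exact hxS (hmax hextend (fun v hv => by simp [hv]) (by simp))

lemma exists_subset_half_le_count (φ : α → List Bool) (C : Finset α) :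
    ∃ S ⊆ C, ∃ b : Bool, C.card ≤ 2 * S.card ∧
      ∀ x ∈ S, ((φ x).length + 1) / 2 ≤ (φ x).count b := by
  have hsum := fun x => List.count_true_add_count_false (φ x)
  rcases card_le_two_mul_card_filter_or_filter_not
    (fun x => (φ x).count false ≤ (φ x).count true) C with hcard | hcard
  · refine ⟨_, Finset.filter_subset _ _, true, hcard, fun x hx => ?_⟩
    have := hsum x
    have := (Finset.mem_filter.mp hx).2
    omega
  · refine ⟨_, Finset.filter_subset _ _, false, hcard, fun x hx => ?_⟩
    have := hsum x
    have := (Finset.mem_filter.mp hx).2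
    omega

end Confusion

section Channels

variable (f : List Bool → Bool)

lemma onlineOutput_nil : onlineOutput f [] = [] := by
  simp [onlineOutput]

lemma onlineOutput_cons (a : Bool) (x : List Bool) :
    onlineOutput f (a :: x) =
      (if f [a] then [a] else []) ++ onlineOutput (fun w => f (a :: w)) x := by
  unfold onlineOutput
  rw [List.length_cons, List.range_succ_eq_map, List.filterMap_cons, List.filterMap_map]
  cases hfa : f [a] <;> simp [hfa]

lemma onlineOutput_append (u x : List Bool) :
    onlineOutput f (u ++ x) = onlineOutput f u ++ onlineOutput (fun w => f (u ++ w)) x := by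
  induction u generalizing f with
  | nil => simp [onlineOutput_nil]
  | cons a u ih => simp [onlineOutput_cons, ih]

lemma onlineOutput_concat (x : List Bool) (a : Bool) :
    onlineOutput f (x ++ [a]) = onlineOutput f x ++ (if f (x ++ [a]) then [a] else []) := by
  simp [onlineOutput_append, onlineOutput_cons, onlineOutput_nil]

lemma onlineOutput_const_true (x : List Bool) : onlineOutput (fun _ => true) x = x := by
  induction x with
  | nil => exact onlineOutput_nil _
  | cons a x ih => simp [onlineOutput_cons, ih]

lemma onlineOutput_sublist (x : List Bool) : (onlineOutput f x).Sublist x := by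
  induction x generalizing f with
  | nil => simp [onlineOutput_nil]
  | cons a x ih =>
    rw [onlineOutput_cons]
    split_ifs
    · exact (ih _).cons_cons a
    · rw [List.nil_append]
      exact (ih _).cons a

variable {f} in
lemma onlineOutput_congr {g : List Bool → Bool} {x : List Bool}
    (h : ∀ w, w ≠ [] → w.length ≤ x.length → f w = g w) :
    onlineOutput f x = onlineOutput g x := by
  induction x generalizing f g with
  | nil => simp only [onlineOutput_nil]
  | cons a x ih =>
    rw [onlineOutput_cons, onlineOutput_cons, h [a] (by simp) (by simp),
      ih fun w _ hw => h (a :: w) (by simp) (by simpa using hw)]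

/-- The channel transmitting exactly the first `k` occurrences of the bit `b`. -/
def capChannel (b : Bool) (k : ℕ) (w : List Bool) : Bool :=
  decide (w.getLast? = some b) && decide (w.count b ≤ k)

lemma onlineOutput_capChannel (b : Bool) (k : ℕ) (x : List Bool) :
    onlineOutput (capChannel b k) x = List.replicate (min k (x.count b)) b := by
  induction x using List.reverseRecOn with
  | nil => simp [onlineOutput_nil]
  | append_singleton x a ih =>
    rw [onlineOutput_concat, ih]
    by_cases hab : a = b
    · subst hab
      rcases Nat.lt_or_ge (x.count a) k with hk | hk
      · simp [capChannel, hk, hk.le, List.replicate_succ']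
      · simp [capChannel, hk, hk.not_gt, hk.trans (Nat.le_succ _)]
    · simp [capChannel, hab]

lemma onlineOutput_capChannel_of_le_count {b : Bool} {k : ℕ} {x : List Bool} (h : k ≤ x.count b) :
    onlineOutput (capChannel b k) x = List.replicate k b := by
  rw [onlineOutput_capChannel, min_eq_left h]

/-- The channel acting as `f` on the first `t` bits, and on the later ones as a channel `g u`
chosen in terms of the prefix `u` of length `t`. -/
def splitChannel (t : ℕ) (g : List Bool → List Bool → Bool) (w : List Bool) : Bool :=
  if w.length ≤ t then f w else g (w.take t) (w.drop t)

lemma onlineOutput_splitChannel {t : ℕ} (g : List Bool → List Bool → Bool) {x : List Bool}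
    (hx : t ≤ x.length) :
    onlineOutput (splitChannel f t g) x =
      onlineOutput f (x.take t) ++ onlineOutput (g (x.take t)) (x.drop t) := by
  have ht : (x.take t).length = t := List.length_take_of_le hx
  conv_lhs => rw [← List.take_append_drop t x, onlineOutput_append]
  congr 1
  · exact onlineOutput_congr fun w _ hw => if_pos (hw.trans ht.le)
  · refine onlineOutput_congr fun w hw _ => ?_
    have hlong : ¬ (x.take t ++ w).length ≤ t := by
      simpa [ht] using hw
    rw [splitChannel, if_neg hlong, List.take_left' ht, List.drop_left' ht]

lemma exists_onlineOutput_eq_iff_sublist {z x : List Bool} :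
    (∃ g, onlineOutput g x = z) ↔ z.Sublist x := by
  refine ⟨fun ⟨g, hg⟩ => hg ▸ onlineOutput_sublist g x, fun h => ?_⟩
  induction h with
  | slnil => exact ⟨fun _ => true, onlineOutput_nil _⟩
  | cons a _ ih =>
    obtain ⟨g, rfl⟩ := ih
    exact ⟨splitChannel (fun _ => false) 1 fun _ => g, by
      rw [onlineOutput_splitChannel _ _ (by simp)]
      simp [onlineOutput_cons, onlineOutput_nil]⟩
  | cons_cons a _ ih =>
    obtain ⟨g, rfl⟩ := ih
    exact ⟨splitChannel (fun _ => true) 1 fun _ => g, by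
      simp [onlineOutput_splitChannel, onlineOutput_const_true]⟩

/-- The channel acting as `f` until `f` makes its `D + 1`-st deletion, and transmitting every bit
from then on. -/
def budgetChannel (D : ℕ) (w : List Bool) : Bool :=
  f w || decide ((onlineOutput f w).length + D < w.length)

variable {f} in
lemma onlineOutput_budgetChannel_eq {D : ℕ} {x : List Bool}
    (h : x.length ≤ (onlineOutput f x).length + D) :
    onlineOutput (budgetChannel f D) x = onlineOutput f x := by
  induction x using List.reverseRecOn with
  | nil => simp only [onlineOutput_nil]
  | append_singleton x a ih =>
    have hlast : budgetChannel f D (x ++ [a]) = f (x ++ [a]) := by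
      simp only [budgetChannel, h.not_gt, decide_false, Bool.or_false]
    have hinit : x.length ≤ (onlineOutput f x).length + D := by
      rw [onlineOutput_concat, List.length_append, List.length_append] at h
      split_ifs at h <;> simp only [List.length_singleton, List.length_nil] at h <;> omega
    rw [onlineOutput_concat, onlineOutput_concat, hlast, ih hinit]

lemma length_le_length_onlineOutput_budgetChannel_add (D : ℕ) (x : List Bool) :
    x.length ≤ (onlineOutput (budgetChannel f D) x).length + D := by
  induction x using List.reverseRecOn with
  | nil => simp
  | append_singleton x a ih =>
    by_cases hD : (x ++ [a]).length ≤ (onlineOutput f (x ++ [a])).length + D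
    · rwa [onlineOutput_budgetChannel_eq hD]
    · have hlast : budgetChannel f D (x ++ [a]) = true := by
        simp only [budgetChannel, not_le.mp hD, decide_true, Bool.or_true]
      rw [onlineOutput_concat, if_pos hlast, List.length_append, List.length_append]
      omega

end Channels

section Attacks

/-- `OnlineConfusable p n S`: some online channel confuses the words of `S` while deleting at most
`pn` bits of each of them. Inputs outside `S` are unrestricted; see
`OnlineConfusable.exists_deletesAtMost`. -/
def OnlineConfusable (p : ℝ) (n : ℕ) (S : Finset (List Bool)) : Prop :=
  ∃ f : List Bool → Bool,
    (∀ x ∈ S, (n : ℝ) - (onlineOutput f x).length ≤ p * n) ∧ Confuses (onlineOutput f) S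

variable {p : ℝ} {n t k : ℕ} {b : Bool} {S : Finset (List Bool)}

lemma OnlineConfusable.exists_deletesAtMost (h : OnlineConfusable p n S) (hp : 0 ≤ p)
    (hlen : ∀ x ∈ S, x.length = n) :
    ∃ f, deletesAtMost f n p ∧ Confuses (onlineOutput f) S := by
  obtain ⟨f, hdel, hconf⟩ := h
  let D := ⌊p * n⌋₊
  have heq : ∀ x ∈ S, onlineOutput (budgetChannel f D) x = onlineOutput f x := by
    refine fun x hx => onlineOutput_budgetChannel_eq ?_
    have hlt : (n : ℝ) < (onlineOutput f x).length + D + 1 := by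
      linarith [hdel x hx, Nat.lt_floor_add_one (p * n)]
    rw [hlen x hx, ← Nat.lt_add_one_iff]
    exact_mod_cast hlt
  refine ⟨budgetChannel f D, fun x hx => ?_, fun x hx => ?_⟩
  · have hle : n - (onlineOutput (budgetChannel f D) x).length ≤ D := by
      have := length_le_length_onlineOutput_budgetChannel_add f D x
      omega
    exact (Nat.cast_le.mpr hle).trans (Nat.floor_le (by positivity))
  · obtain ⟨y, hy, hne, hxy⟩ := hconf x hx
    exact ⟨y, hy, hne, by rw [heq x hx, heq y hy, hxy]⟩

lemma onlineConfusable_of_confuses_take (hlen : ∀ x ∈ S, t ≤ x.length)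
    (hconf : Confuses (List.take t) S) (hcount : ∀ x ∈ S, k ≤ (x.drop t).count b)
    (hp : (n : ℝ) - (t + k) ≤ p * n) : OnlineConfusable p n S := by
  let f := splitChannel (fun _ => true) t fun _ => capChannel b k
  have hout : ∀ x ∈ S, onlineOutput f x = x.take t ++ List.replicate k b := fun x hx => by
    rw [onlineOutput_splitChannel _ _ (hlen x hx), onlineOutput_const_true,
      onlineOutput_capChannel_of_le_count (hcount x hx)]
  refine ⟨f, fun x hx => ?_, fun x hx => ?_⟩
  · rw [hout x hx, List.length_append, List.length_take_of_le (hlen x hx), List.length_replicate]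
    exact_mod_cast hp
  · obtain ⟨y, hy, hne, hxy⟩ := hconf x hx
    exact ⟨y, hy, hne, by rw [hout x hx, hout y hy, hxy]⟩

lemma onlineConfusable_of_injOn_take {z : List Bool → List Bool} (hlen : ∀ x ∈ S, t ≤ x.length)
    (hinj : Set.InjOn (List.take t) (S : Set (List Bool)))
    (hcount : ∀ x ∈ S, k ≤ (x.take t).count b)
    (hz : ∀ x ∈ S, (z x).Sublist (x.drop t)) (hconf : Confuses z S)
    (hp : ∀ x ∈ S, (n : ℝ) - (k + (z x).length) ≤ p * n) : OnlineConfusable p n S := by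
  -- Seeing the prefix `u` of a word of `S`, the channel knows the suffix in advance.
  have hfuture : ∀ u, ∃ g, ∀ x ∈ S, x.take t = u → onlineOutput g (x.drop t) = z x := by
    intro u
    by_cases hu : ∃ x ∈ S, x.take t = u
    · obtain ⟨x, hx, rfl⟩ := hu
      obtain ⟨g, hg⟩ := exists_onlineOutput_eq_iff_sublist.mpr (hz x hx)
      exact ⟨g, fun y hy hyx => hinj hy hx hyx ▸ hg⟩
    · exact ⟨fun _ => true, fun x hx hxu => absurd ⟨x, hx, hxu⟩ hu⟩
  choose g hg using hfuture
  let f := splitChannel (capChannel b k) t g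
  have hout : ∀ x ∈ S, onlineOutput f x = List.replicate k b ++ z x := fun x hx => by
    rw [onlineOutput_splitChannel _ _ (hlen x hx),
      onlineOutput_capChannel_of_le_count (hcount x hx), hg _ x hx rfl]
  refine ⟨f, fun x hx => ?_, fun x hx => ?_⟩
  · rw [hout x hx, List.length_append, List.length_replicate]
    exact_mod_cast hp x hx
  · obtain ⟨y, hy, hne, hxy⟩ := hconf x hx
    exact ⟨y, hy, hne, by rw [hout x hx, hout y hy, hxy]⟩

lemma exists_subset_onlineConfusable {a : ℝ} {m : ℕ} {C : Finset (List Bool)}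
    (htm : t + m = n) (hlen : ∀ c ∈ C, c.length = n)
    (hpair : ∀ L ⊆ C, ∃ S ⊆ L, ∃ z : List Bool → List Bool,
      (∀ x ∈ S, (z x).Sublist (x.drop t) ∧ a ≤ (z x).length) ∧ Confuses z S ∧
      16 * (L \ S).card ≤ C.card)
    (hp_drop : (m : ℝ) / 2 ≤ p * n) (hp_take : n - ((t : ℝ) / 2 + a) ≤ p * n) :
    ∃ S ⊆ C, C.card ≤ 16 * S.card ∧ OnlineConfusable p n S := by
  have le_two_mul_half (j : ℕ) : (j : ℝ) ≤ 2 * ((j + 1) / 2 : ℕ) :=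
    mod_cast (by omega : j ≤ 2 * ((j + 1) / 2))
  obtain ⟨C₁, hC₁, b₁, hcard₁, hcount₁⟩ := exists_subset_half_le_count (List.take t) C
  obtain ⟨C₂, hC₂, b₂, hcard₂, hcount₂⟩ := exists_subset_half_le_count (List.drop t) C₁
  obtain ⟨T, hT, hcardT, hconf | hinj⟩ := exists_subset_confuses_or_injOn (List.take t) C₂
  · have hTC : T ⊆ C := hT.trans (hC₂.trans hC₁)
    refine ⟨T, hTC, by omega, onlineConfusable_of_confuses_take (k := (m + 1) / 2) (b := b₂)
      (fun x hx => ?_) hconf (fun x hx => ?_) ?_⟩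
    · have := hlen x (hTC hx)
      omega
    · have := hcount₂ x (hT hx)
      rwa [List.length_drop, hlen x (hTC hx), ← htm, Nat.add_sub_cancel_left] at this
    · have := le_two_mul_half m
      rw [← htm] at hp_drop ⊢
      push_cast at hp_drop this ⊢
      linarith
  · have hTC : T ⊆ C := hT.trans (hC₂.trans hC₁)
    obtain ⟨S, hST, z, hz, hconf, hrest⟩ := hpair T hTC
    have hcardS := Finset.card_sdiff_add_card_eq_card hST
    have htlen : ∀ x ∈ S, t ≤ x.length := fun x hx => by
      have := hlen x (hTC (hST hx))
      omega
    refine ⟨S, hST.trans hTC, by omega, onlineConfusable_of_injOn_take (k := (t + 1) / 2) (b := b₁)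
      htlen (hinj.mono hST) (fun x hx => ?_) (fun x hx => (hz x hx).1) hconf fun x hx => ?_⟩
    · have := hcount₁ x (hC₂ (hT (hST hx)))
      rwa [List.length_take_of_le (htlen x hx)] at this
    · linarith [le_two_mul_half t, (hz x hx).2]

end Attacks

lemma eventually_mul_rpow_le_rpow {B a b : ℝ} (hB : 1 < B) (hab : a < b) (K : ℝ) :
    ∀ᶠ n : ℕ in atTop, K * B ^ (a * n) ≤ B ^ (b * n) := by
  have hB0 : 0 < B := one_pos.trans hB
  have hlim : Tendsto (fun n : ℕ => (B ^ (b - a)) ^ n) atTop atTop :=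
    tendsto_pow_atTop_atTop_of_one_lt (Real.one_lt_rpow hB (sub_pos.mpr hab))
  filter_upwards [hlim.eventually_ge_atTop K] with n hn
  calc K * B ^ (a * n) ≤ (B ^ (b - a)) ^ n * B ^ (a * n) := by gcongr
    _ = B ^ (b * n) := by
      rw [← Real.rpow_mul_natCast hB0.le, ← Real.rpow_add hB0]
      ring_nf

section Goodness

variable {p q δ : ℝ}

lemma advGood.onGood (h : advGood p) : onGood p := by
  obtain ⟨δ, hδ, h⟩ := h
  refine ⟨δ, hδ, fun ε hε n₀ => ?_⟩
  obtain ⟨n, hn, C, hlen, hcard, hC⟩ := h n₀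
  have hCpos : (0 : ℝ) < C.card := (Real.rpow_pos_of_pos two_pos _).trans_le hcard
  obtain ⟨c₀, hc₀⟩ := Finset.card_pos.mp (Nat.cast_pos.mp hCpos)
  have hdec : ∀ s : List Bool, ∃ d ∈ C, ∀ c ∈ C, s.Sublist c → s.Sublist d := fun s => by
    by_cases hs : ∃ d ∈ C, s.Sublist d
    · exact hs.imp fun d hd => ⟨hd.1, fun _ _ _ => hd.2⟩
    · exact ⟨c₀, hc₀, fun c hc hsc => absurd ⟨c, hc, hsc⟩ hs⟩
  choose Dec hDC hDec using hdec
  refine ⟨n, hn, C, hlen, hcard, Dec, hDC, fun f hf => ?_⟩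
  have hcorrect : ∀ c ∈ C, ¬ Dec (onlineOutput f c) ≠ c := fun c hc hne => by
    have hsub := onlineOutput_sublist f c
    have hshort := hC _ (hDC _) c hc hne _ (hDec _ c hc hsub) hsub
    have hdel := hf c (hlen c hc)
    rw [Nat.cast_sub (hlen c hc ▸ hsub.length_le)] at hdel
    linarith
  rw [Finset.filter_false_of_mem hcorrect, Finset.card_empty, Nat.cast_zero]
  positivity

lemma onGood.mono (hpq : p ≤ q) (h : onGood q) : onGood p := by
  obtain ⟨δ, hδ, h⟩ := h
  refine ⟨δ, hδ, fun ε hε n₀ => ?_⟩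
  obtain ⟨n, hn, C, hlen, hcard, Dec, hDC, hC⟩ := h ε hε n₀
  refine ⟨n, hn, C, hlen, hcard, Dec, hDC, fun f hf => hC f fun x hx => (hf x hx).trans ?_⟩
  gcongr

lemma not_onGood_of_eventually_onlineConfusable (k : ℕ) (hp : 0 ≤ p)
    (h : ∀ δ : ℝ, 0 < δ → ∀ᶠ n : ℕ in atTop, ∀ C : Finset (List Bool), (∀ c ∈ C, c.length = n) →
      (2 : ℝ) ^ (δ * n) ≤ C.card → ∃ S ⊆ C, C.card ≤ k * S.card ∧ OnlineConfusable p n S) :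
    ¬ onGood p := by
  rintro ⟨δ, hδ, hgood⟩
  obtain ⟨n, ⟨C, hlen, hcard, Dec, -, hDec⟩, hn⟩ :=
    ((frequently_atTop.mpr (hgood (1 / (2 * k + 1)) (by positivity))).and_eventually
      (h δ hδ)).exists
  obtain ⟨S, hSC, hSk, hS⟩ := hn C hlen hcard
  obtain ⟨f, hf, hconf⟩ := hS.exists_deletesAtMost hp fun x hx => hlen x (hSC hx)
  set errors := C.filter fun c => Dec (onlineOutput f c) ≠ c
  have hS_le : S.card ≤ 2 * errors.card := (hconf.card_le_two_mul_card_filter_ne Dec).trans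
    (Nat.mul_le_mul_left 2 (Finset.card_le_card (Finset.filter_subset_filter _ hSC)))
  have hC_le : (C.card : ℝ) ≤ k * (2 * errors.card) :=
    mod_cast hSk.trans (Nat.mul_le_mul_left k hS_le)
  have herrors : (2 * k + 1) * (errors.card : ℝ) ≤ C.card := by
    have := hDec f hf
    rwa [one_div, ← div_eq_inv_mul, le_div_iff₀' (by positivity)] at this
  have hCpos : (0 : ℝ) < C.card := (Real.rpow_pos_of_pos two_pos _).trans_le hcard
  have herrors_nonpos : (errors.card : ℝ) ≤ 0 := by linarith
  linarith [mul_nonpos_of_nonneg_of_nonpos (k.cast_nonneg (α := ℝ)) herrors_nonpos]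

lemma not_onGood_half : ¬ onGood (1 / 2) := by
  refine not_onGood_of_eventually_onlineConfusable 2 (by norm_num) fun δ hδ => ?_
  filter_upwards [eventually_mul_rpow_le_rpow one_lt_two hδ 4] with n hn C hlen hcard
  have hC : 4 ≤ C.card := by
    rw [zero_mul, Real.rpow_zero, mul_one] at hn
    exact_mod_cast hn.trans hcard
  obtain ⟨S, hSC, b, hCS, hcount⟩ := exists_subset_half_le_count id C
  refine ⟨S, hSC, hCS, onlineConfusable_of_confuses_take (t := 0) (k := (n + 1) / 2) (b := b)
    (fun x _ => x.length.zero_le) (fun x _ => ?_) (fun x hx => ?_) ?_⟩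
  · obtain ⟨y, hy, hne⟩ := Finset.exists_mem_ne (s := S) (by omega) x
    exact ⟨y, hy, hne, by simp only [List.take_zero]⟩
  · simpa only [id, hlen x (hSC hx), List.drop_zero] using hcount x hx
  · have : (n : ℝ) ≤ 2 * ((n + 1) / 2 : ℕ) := mod_cast (by omega : n ≤ 2 * ((n + 1) / 2))
    rw [Nat.cast_zero]
    linarith

lemma eventually_card_lt_of_not_advGood (hq : ¬ advGood q) (hδ : 0 < δ) :
    ∀ᶠ n : ℕ in atTop, ∀ C : Finset (List Bool), (∀ c ∈ C, c.length = n) →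
      (∀ x ∈ C, ∀ y ∈ C, x ≠ y →
        ∀ z : List Bool, z.Sublist x → z.Sublist y → (z.length : ℝ) < (1 - q) * n) →
      (C.card : ℝ) < 2 ^ (δ * n) := by
  by_contra hfreq
  refine hq ⟨δ, hδ, frequently_atTop.mp ((not_eventually.mp hfreq).mono fun n hn => ?_)⟩
  push Not at hn
  obtain ⟨C, hlen, hC, hcard⟩ := hn
  exact ⟨C, hlen, hcard, hC⟩

lemma eventually_exists_subset_confuses_of_not_advGood {α : Type*} [DecidableEq α] (hq0 : 0 ≤ q)
    (hq : ¬ advGood q) (hδ : 0 < δ) :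
    ∀ᶠ m : ℕ in atTop, ∀ (φ : α → List Bool) (L : Finset α), (∀ x ∈ L, (φ x).length = m) →
      ∃ S ⊆ L, ∃ z : α → List Bool,
        (∀ x ∈ S, (z x).Sublist (φ x) ∧ (1 - q) * m ≤ (z x).length) ∧ Confuses z S ∧
        ((L \ S).card : ℝ) < 2 ^ (δ * m) := by
  filter_upwards [eventually_card_lt_of_not_advGood hq hδ] with m hm φ L hlen
  obtain ⟨S, hSL, z, hz, hconf, hrest⟩ := exists_subset_confuses_forall_sdiff
    (fun (w : List Bool) x => w.Sublist (φ x) ∧ (1 - q) * m ≤ (w.length : ℝ)) L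
  refine ⟨S, hSL, z, hz, hconf, ?_⟩
  have hlen' : ∀ x ∈ L \ S, (φ x).length = m := fun x hx => hlen x (Finset.sdiff_subset hx)
  have hinj : Set.InjOn φ ((L \ S : Finset α) : Set α) := fun x hx y hy hxy => by
    by_contra hne
    have hself : (1 - q) * m ≤ ((φ x).length : ℝ) := by
      rw [hlen' x hx]
      nlinarith [m.cast_nonneg (α := ℝ)]
    exact hrest x hx y hy hne (φ x) ⟨List.Sublist.refl _, hself⟩ ⟨hxy ▸ List.Sublist.refl _, hself⟩
  rw [← Finset.card_image_of_injOn hinj]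
  refine hm _ (Finset.forall_mem_image.mpr hlen') ?_
  simp only [Finset.forall_mem_image]
  intro x hx y hy hne w hwx hwy
  by_contra! hlong
  exact hrest x hx y hy (ne_of_apply_ne φ hne) w ⟨hwx, hlong⟩ ⟨hwy, hlong⟩

lemma not_onGood_of_not_advGood (hq0 : 0 < q) (hq_half : q ≤ 1 / 2) (hq : ¬ advGood q) :
    ¬ onGood ((q + 1 / 2) / 2) := by
  refine not_onGood_of_eventually_onlineConfusable 16 (by positivity) fun δ hδ => ?_
  have htop : Tendsto (fun n : ℕ => n - n / 2) atTop atTop :=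
    tendsto_atTop.mpr fun m => (eventually_ge_atTop (2 * m)).mono fun n hn => by omega
  have hpair := htop.eventually
    (eventually_exists_subset_confuses_of_not_advGood (α := List Bool) hq0.le hq (half_pos hδ))
  have hlong : ∀ᶠ n : ℕ in atTop, 1 / q ≤ n :=
    tendsto_natCast_atTop_atTop.eventually_ge_atTop (1 / q)
  filter_upwards [hpair, eventually_mul_rpow_le_rpow one_lt_two (half_lt_self hδ) 16, hlong]
    with n hpair hlarge hlong C hlen hcard
  have htm : n / 2 + (n - n / 2) = n := Nat.add_sub_cancel' (Nat.div_le_self n 2)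
  have hm_eq : ((n - n / 2 : ℕ) : ℝ) = n - (n / 2 : ℕ) := Nat.cast_sub (Nat.div_le_self n 2)
  have ht : ((n / 2 : ℕ) : ℝ) ≤ n / 2 := Nat.cast_div_le
  have hm : ((n - n / 2 : ℕ) : ℝ) ≤ (n + 1) / 2 := by
    rw [le_div_iff₀ two_pos]
    exact_mod_cast (by omega : (n - n / 2) * 2 ≤ n + 1)
  refine exists_subset_onlineConfusable (a := (1 - q) * (n - n / 2 : ℕ)) htm hlen
    (fun L hL => ?_) ?_ ?_
  · obtain ⟨S, hSL, z, hz, hconf, hrest⟩ := hpair (List.drop (n / 2)) L fun x hx => by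
      rw [List.length_drop, hlen x (hL hx)]
    refine ⟨S, hSL, z, hz, hconf, ?_⟩
    have hfew : (16 : ℝ) * (L \ S).card ≤ C.card :=
      calc
        (16 : ℝ) * (L \ S).card ≤ 16 * 2 ^ (δ / 2 * (n - n / 2 : ℕ)) := by gcongr
        _ ≤ 16 * 2 ^ (δ / 2 * n) := by
          gcongr
          · exact one_le_two
          · exact n.sub_le _
        _ ≤ 2 ^ (δ * n) := hlarge
        _ ≤ C.card := hcard
    exact_mod_cast hfew
  · rw [div_le_iff₀' hq0] at hlong
    linarith
  · have := sub_nonneg.mpr hq_half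
    calc (n : ℝ) - ((n / 2 : ℕ) / 2 + (1 - q) * (n - n / 2 : ℕ))
        = q * n + (1 / 2 - q) * (n / 2 : ℕ) := by rw [hm_eq]; ring
      _ ≤ q * n + (1 / 2 - q) * (n / 2) := by gcongr
      _ = (q + 1 / 2) / 2 * n := by ring

end Goodness

section Thresholds

lemma p0adv_nonneg : 0 ≤ p0adv :=
  Real.sSup_nonneg fun _ hp => hp.1.1

lemma not_advGood_of_p0adv_lt {q : ℝ} (hq : p0adv < q) (hq1 : q ≤ 1) : ¬ advGood q := fun h =>
  hq.not_ge (le_csSup ⟨1, fun _ hp => hp.1.2⟩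
    ⟨⟨p0adv_nonneg.trans hq.le, hq1⟩, h⟩)

lemma p0ond_le_of_not_onGood {r : ℝ} (hr0 : 0 ≤ r) (hr : ¬ onGood r) : p0ond ≤ r :=
  Real.sSup_le (fun _ hp => le_of_not_ge fun hle => hr (hp.2.mono hle)) hr0

lemma p0adv_le_p0ond : p0adv ≤ p0ond :=
  Real.sSup_le (fun _ hp => le_csSup ⟨1, fun _ hp => hp.1.2⟩ ⟨hp.1, hp.2.onGood⟩)
    (Real.sSup_nonneg fun _ hp => hp.1.1)

lemma p0ond_le_half : p0ond ≤ 1 / 2 :=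
  p0ond_le_of_not_onGood (by norm_num) not_onGood_half

lemma p0ond_le_p0adv_add_half_div_two : p0ond ≤ (p0adv + 1 / 2) / 2 := by
  suffices h : 2 * p0ond - 1 / 2 ≤ p0adv by linarith
  refine le_of_forall_gt_imp_ge_of_dense fun q hq => ?_
  have hq0 : 0 < q := p0adv_nonneg.trans_lt hq
  rcases le_total q (1 / 2) with hq_half | hq_half
  · have hbad := not_onGood_of_not_advGood hq0 hq_half
      (not_advGood_of_p0adv_lt hq (by linarith))
    linarith [p0ond_le_of_not_onGood (by positivity) hbad]
  · linarith [p0ond_le_half]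

end Thresholds

/-- The adversarial zero-rate threshold equals `1/2` iff the deterministic zero-rate
threshold for online deletions equals `1/2`. -/
theorem adv_threshold_half_iff_online_threshold_half :
    p0adv = 1 / 2 ↔ p0ond = 1 / 2 := by
  have hadv_le := p0adv_le_p0ond
  have hond_le_half := p0ond_le_half
  have hond_le := p0ond_le_p0adv_add_half_div_two
  constructor <;> intro h <;> linarith
end

section
/- Let λ ≥ 1 be an integer and let K be an integer with K ≥ 2^{2^{λ+5}}. Then (λ−1)/K + (1/K)·Σ_{j=λ}^{K} Σ_{k=1}^{2K²} (1 − j/K)^{k−1} ≥ (log₂ K)/4. -/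
/-!
By the geometric sum formula, an inner sum of `n` terms at `p = j / K` is
`(1 - (1 - p) ^ n) / p ≥ (1 - exp (-n / K)) * K / j`, so averaging over `j` leaves a harmonic sum,
which dominates `log (K / λ)`. Once `2 * K ≤ n` the truncation leaves a factor of at least
`1 - exp (-2) ≥ 3 / 4`, and once `λ ^ 2 ≤ K` the logarithm is at least `log K / 2`; this is enough
because `3 / 8 ≥ 1 / (4 * log 2)`.
-/

open Finset Real

theorem one_sub_exp_neg_mul_le_mul_geom_sum {p : ℝ} (hp : p ≤ 1) (n : ℕ) :
    1 - exp (-(n * p)) ≤ p * ∑ k ∈ range n, (1 - p) ^ k := by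
  have htail : (1 - p) ^ n ≤ exp (-(n * p)) := by
    rw [← mul_neg, exp_nat_mul]
    exact pow_le_pow_left₀ (sub_nonneg.2 hp) (one_sub_le_exp_neg p) n
  have hgeom : p * ∑ k ∈ range n, (1 - p) ^ k = 1 - (1 - p) ^ n := by
    simpa only [sub_sub_cancel] using mul_neg_geom_sum (1 - p) n
  rw [hgeom]
  exact sub_le_sub_left htail 1

theorem one_sub_exp_mul_inv_le_geom_sum_div {x y : ℝ} (hx : 1 ≤ x) (hxy : x ≤ y) (n : ℕ) :
    (1 - exp (-(n / y))) * x⁻¹ ≤ 1 / y * ∑ k ∈ range n, (1 - x / y) ^ k := by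
  have hx_pos : 0 < x := one_pos.trans_le hx
  have hy_pos : 0 < y := hx_pos.trans_le hxy
  calc (1 - exp (-(n / y))) * x⁻¹
      ≤ (1 - exp (-(n * (x / y)))) * x⁻¹ := by
        rw [← mul_div_assoc]
        gcongr
        exact le_mul_of_one_le_right n.cast_nonneg hx
    _ ≤ (x / y * ∑ k ∈ range n, (1 - x / y) ^ k) * x⁻¹ := by
        gcongr
        exact one_sub_exp_neg_mul_le_mul_geom_sum (div_le_one_of_le₀ hxy hy_pos.le) n
    _ = 1 / y * ∑ k ∈ range n, (1 - x / y) ^ k := by field_simp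

theorem log_div_le_sum_Ico_inv {a b : ℕ} (ha : 0 < a) (hab : a ≤ b) :
    log (b / a) ≤ ∑ j ∈ Ico a b, (j : ℝ)⁻¹ := by
  have ha' : (0 : ℝ) < a := mod_cast ha
  have hb' : (0 : ℝ) < b := mod_cast ha.trans_le hab
  rw [← integral_inv_of_pos ha' hb']
  exact (inv_antitoneOn_Icc_right ha').integral_le_sum_Ico hab

theorem one_sub_exp_mul_log_le_sum_geom_sum_div {a K : ℕ} (ha : 0 < a) (haK : a ≤ K) (n : ℕ) :
    (1 - exp (-(n / K))) * log ((K + 1) / a) ≤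
      1 / K * ∑ j ∈ Icc a K, ∑ k ∈ range n, (1 - (j : ℝ) / K) ^ k := by
  have hharmonic : log ((K + 1) / a) ≤ ∑ j ∈ Icc a K, (j : ℝ)⁻¹ := by
    simpa only [Nat.cast_add_one, Ico_add_one_right_eq_Icc] using
      log_div_le_sum_Ico_inv ha (haK.trans (Nat.le_add_right K 1))
  have htrunc : 0 ≤ 1 - exp (-((n : ℝ) / K)) :=
    sub_nonneg.2 (exp_le_one_iff.2 (neg_nonpos.2 (by positivity)))
  calc (1 - exp (-(n / K))) * log ((K + 1) / a)
      ≤ (1 - exp (-(n / K))) * ∑ j ∈ Icc a K, (j : ℝ)⁻¹ :=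
        mul_le_mul_of_nonneg_left hharmonic htrunc
    _ ≤ 1 / K * ∑ j ∈ Icc a K, ∑ k ∈ range n, (1 - (j : ℝ) / K) ^ k := by
        rw [mul_sum, mul_sum]
        refine sum_le_sum fun j hj => ?_
        obtain ⟨haj, hjK⟩ := mem_Icc.1 hj
        exact one_sub_exp_mul_inv_le_geom_sum_div (mod_cast ha.trans_le haj) (mod_cast hjK) n

theorem exp_neg_le_one_fourth_of_two_le {t : ℝ} (ht : 2 ≤ t) : exp (-t) ≤ 1 / 4 := by
  calc exp (-t) ≤ exp (-(1 + 1)) := exp_le_exp.2 (by linarith)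
    _ = (exp 1 * exp 1)⁻¹ := by rw [exp_neg, exp_add]
    _ ≤ (2 * 2)⁻¹ := by gcongr <;> exact exp_one_gt_two.le
    _ = 1 / 4 := by norm_num

theorem log_div_two_le_log_div_of_sq_le {x y : ℝ} (hx : 0 < x) (hxy : x ^ 2 ≤ y) :
    log y / 2 ≤ log (y / x) := by
  have hy : 0 < y := (pow_pos hx 2).trans_le hxy
  have hlog : 2 * log x ≤ log y := by
    simpa only [log_pow, Nat.cast_ofNat] using log_le_log (pow_pos hx 2) hxy
  rw [log_div hy.ne' hx.ne']
  linarith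

theorem logb_two_div_four_le_mul_log {x : ℝ} (hx : 1 ≤ x) : logb 2 x / 4 ≤ 3 / 4 * (log x / 2) := by
  have htwo : 2 / 3 < log 2 := by linarith [log_two_gt_d9]
  rw [logb, div_div, div_le_iff₀ (by positivity)]
  nlinarith [log_nonneg hx]

theorem sum_Icc_one_apply_sub_one {M : Type*} [AddCommMonoid M] (f : ℕ → M) (n : ℕ) :
    ∑ k ∈ Icc 1 n, f (k - 1) = ∑ k ∈ range n, f k := by
  rw [← Ico_add_one_right_eq_Icc, sum_Ico_eq_sum_range]
  simp only [add_tsub_cancel_left, add_tsub_cancel_right]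

theorem sq_le_two_pow_two_pow : ∀ n : ℕ, n ^ 2 ≤ 2 ^ 2 ^ n
  | 0 => by norm_num
  | m + 1 => by
    have hm : m + 1 ≤ 2 ^ 2 ^ m :=
      (Nat.succ_le_of_lt m.lt_two_pow_self).trans Nat.lt_two_pow_self.le
    calc (m + 1) ^ 2 ≤ (2 ^ 2 ^ m) ^ 2 := Nat.pow_le_pow_left hm 2
      _ = 2 ^ 2 ^ (m + 1) := by rw [← pow_mul, ← pow_succ]

theorem expected_span_lb_general {lam K n : ℕ} (hlam : 1 ≤ lam) (hK : lam ^ 2 ≤ K)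
    (hn : 2 * K ≤ n) :
    logb 2 K / 4 ≤
      ((lam : ℝ) - 1) / K +
        (1 / K) * ∑ j ∈ Icc lam K, ∑ k ∈ Icc 1 n, (1 - (j : ℝ) / K) ^ (k - 1) := by
  have hlamK : lam ≤ K := (Nat.le_self_pow two_ne_zero lam).trans hK
  have hlam_one : (1 : ℝ) ≤ lam := mod_cast hlam
  have hK_one : (1 : ℝ) ≤ K := mod_cast hlam.trans hlamK
  have htrunc : 3 / 4 ≤ 1 - exp (-((n : ℝ) / K)) := by
    have hnK : 2 ≤ (n : ℝ) / K := (le_div_iff₀ (by positivity)).2 (mod_cast hn)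
    linarith [exp_neg_le_one_fourth_of_two_le hnK]
  have hlog : log K / 2 ≤ log ((K + 1) / lam) :=
    (log_div_two_le_log_div_of_sq_le (x := lam) (by positivity) (mod_cast hK)).trans
      (log_le_log (by positivity) (by gcongr; linarith))
  calc logb 2 K / 4 ≤ 3 / 4 * (log K / 2) := logb_two_div_four_le_mul_log hK_one
    _ ≤ (1 - exp (-(n / K))) * log ((K + 1) / lam) :=
        mul_le_mul htrunc hlog (div_nonneg (log_nonneg hK_one) two_pos.le) (by linarith)
    _ ≤ 1 / K * ∑ j ∈ Icc lam K, ∑ k ∈ range n, (1 - (j : ℝ) / K) ^ k :=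
        one_sub_exp_mul_log_le_sum_geom_sum_div hlam hlamK n
    _ = 1 / K * ∑ j ∈ Icc lam K, ∑ k ∈ Icc 1 n, (1 - (j : ℝ) / K) ^ (k - 1) := by
        congr 1
        exact sum_congr rfl fun j _ => (sum_Icc_one_apply_sub_one _ n).symm
    _ ≤ _ := le_add_of_nonneg_left (div_nonneg (sub_nonneg.2 hlam_one) (by positivity))

/-- For `λ ≥ 1` and `K ≥ 2^{2^{λ+5}}`:
`(λ−1)/K + (1/K)·Σ_{j=λ}^{K} Σ_{k=1}^{2K²} (1 − j/K)^{k−1} ≥ (log₂ K)/4`.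
The left-hand side is the expectation of `D`, where `J` is uniform on `{1,…,K}`,
`D = 1` if `J ≤ λ−1`, and otherwise `D = min(Z, 2K²)` for `Z` geometric with success
probability `J/K`; `2K² = √R` for `R = 4K⁴`. -/
theorem expected_span_lb (lam K : ℕ) (hlam : 1 ≤ lam) (hK : 2 ^ 2 ^ (lam + 5) ≤ K) :
    Real.logb 2 K / 4 ≤
      ((lam : ℝ) - 1) / K +
        (1 / K) * ∑ j ∈ Finset.Icc lam K,
          ∑ k ∈ Finset.Icc 1 (2 * K ^ 2), (1 - (j : ℝ) / K) ^ (k - 1) := by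
  have hsq : lam ^ 2 ≤ K := by
    refine le_trans ((sq_le_two_pow_two_pow lam).trans ?_) hK
    gcongr <;> omega
  exact expected_span_lb_general hlam hsq (Nat.mul_le_mul_left 2 (Nat.le_self_pow two_ne_zero K))
end
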